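/- Let M be a finitely generated ℤ[G]-module and let τ be a faithful irreducible complex representation of G. If p^n does not divide q−1, then p divides the multiplicity ⟨M ⊗_ℤ ℂ, τ⟩ of τ in the complex representation of G on M ⊗_ℤ ℂ. -/

import Mathlib

/-!
Put `z = b ^ p ^ r`, which is central, and `h = a * z`, an element of order `k = q * p ^ (n - r)` whose
cyclic group is normal with cyclic quotient of order `p ^ r`. A faithful irreducible `τ` has an
eigenvector `v` of `h` whose eigenvalue `θ` is a primitive `k`-th root of unity, and the translates
`bⁱ v`, `i < p ^ r`, form a basis of `τ`. Hence (`finrank_intertwiningMap`) the multiplicity of `τ` in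
`M ⊗ ℂ` is the dimension `d` of the `θ`-eigenspace of `h`, and this dimension may be computed over
`L = ℚ(θ)` (`finrank_eigenspace_baseChange`).

The rational structure of `M` enters through Galois descent. Let `σ` be the automorphism of `L` that
fixes the `p`-part `ζ` of `θ` and raises the `q`-part to the power `j`. Then `T = b ∘ (σ ⊗ 1)` is a
`σ`-semilinear map of the `θ`-eigenspace `U` of `h` in `L ⊗ M`, and `T ^ p ^ r` is the action of
`z`, which is the scalar `ζ` on `U`. Taking determinants
(`exists_twistedNorm_eq`) shows that `ζ ^ d` is a norm from `L` to `L ^ σ`: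
`x · σ x ⋯ σ^{p^r - 1} x = ζ ^ d` for some `x` in `L`.

This is impossible for `p ∤ d` by a local argument at `q` (`dvd_of_twistedNorm_eq`). Modulo a prime
`P` of `𝓞 L = ℤ[θ]` above `q` the `q`-part of `θ` is `1`, so `σ` acts trivially on `𝓞 L / P` and the
equation reads `u ^ p ^ r = ζ ^ d` there. If `p ∤ d`, then `u` has order `p ^ n`. But `𝓞 L / P` is generated
by `ζ`, of order `p ^ (n - r)` with `r ≥ 1`. Since `p ^ n ∤ q - 1`, some power `q ^ f` satisfies
`p ^ (n - 1) ∣ q ^ f - 1` and `p ^ n ∤ q ^ f - 1` (`exists_frobenius_exponent`); the first property says that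
`y ^ q ^ f = y` throughout `𝓞 L / P`, and the second that no element fixed in this way has order
`p ^ n`.
-/

open CategoryTheory Finset
open scoped TensorProduct

/-! ### Arithmetic in a residue field of characteristic `q` -/

/-- Lifting the exponent: raising `q` to a suitable power of `p` makes the `p`-adic valuation of
`q ^ f - 1` equal to exactly `n - 1`. This uses `v_p (q - 1) ≤ n - 1`. -/
lemma exists_frobenius_exponent {p q n : ℕ} (hp : p.Prime) (hpodd : Odd p) (hq : q.Prime)
    (hpq : p ≠ q) (h1 : p ∣ q - 1) (hn : ¬ p ^ n ∣ q - 1) :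
    ∃ f, p ^ (n - 1) ∣ q ^ f - 1 ∧ ¬ p ^ n ∣ q ^ f - 1 := by
  have hfin : FiniteMultiplicity p (q - 1) :=
    Nat.finiteMultiplicity_iff.mpr ⟨hp.ne_one, Nat.sub_pos_of_lt hq.one_lt⟩
  obtain ⟨s, hs⟩ : ∃ s : ℕ, emultiplicity p (q - 1) = s :=
    ⟨_, hfin.emultiplicity_eq_multiplicity⟩
  have hs' := emultiplicity_eq_coe.mp hs
  have hsn : s < n := by
    by_contra h
    exact hn ((pow_dvd_pow p (not_lt.mp h)).trans hs'.1)
  have hpq' : ¬ p ∣ q := fun h => hpq ((Nat.prime_dvd_prime_iff_eq hp hq).mp h)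
  have key := Nat.emultiplicity_pow_sub_pow hp hpodd h1 hpq' (p ^ (n - 1 - s))
  rw [one_pow, hs, emultiplicity_pow_self hp.ne_zero
    (by rw [Nat.isUnit_iff]; exact hp.ne_one)] at key
  have e : ((s : ℕ∞) + ((n - 1 - s : ℕ) : ℕ∞)) = ((n - 1 : ℕ) : ℕ∞) := by
    rw [← Nat.cast_add]; congr 1; omega
  rw [e, emultiplicity_eq_coe, Nat.sub_add_cancel (by omega)] at key
  exact ⟨_, key⟩

/-- The contradiction in residue characteristic `q`: if `z` has order `p ^ (n - r)` and `p ∤ d`, a root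
`u` of `u ^ p ^ r = z ^ d` has order exactly `p ^ n`, whereas `u ^ q ^ f = u` forces that order to
divide `q ^ f - 1`. -/
lemma dvd_of_pow_eq_residue {F : Type*} [Field F] {p q n r f d : ℕ} (hp : p.Prime) (hq : q.Prime)
    (hrn : r < n) {z u : F} (hz1 : z ^ p ^ (n - r) = 1) (hz2 : z ^ p ^ (n - r - 1) ≠ 1)
    (hu : u ^ p ^ r = z ^ d) (huf : u ^ q ^ f = u) (hf : ¬ p ^ n ∣ q ^ f - 1) : p ∣ d := by
  by_contra hd
  have := Fact.mk hp
  have hz : z ≠ 0 := by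
    rintro rfl
    rw [zero_pow (pow_ne_zero _ hp.ne_zero)] at hz1
    exact zero_ne_one hz1
  have hu0 : u ≠ 0 := by
    rintro rfl
    rw [zero_pow (pow_ne_zero _ hp.ne_zero)] at hu
    exact pow_ne_zero d hz hu.symm
  have hzo : orderOf z = p ^ (n - r) := by
    have := orderOf_eq_prime_pow (n := n - r - 1) hz2
      (by rwa [Nat.sub_add_cancel (by omega)])
    rwa [Nat.sub_add_cancel (by omega)] at this
  have hu1 : u ^ p ^ n = 1 := by
    have : p ^ n = p ^ r * p ^ (n - r) := by rw [← pow_add]; congr 1; omega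
    rw [this, pow_mul, hu, ← pow_mul, mul_comm, pow_mul, hz1, one_pow]
  have hu2 : u ^ p ^ (n - 1) ≠ 1 := by
    intro h
    have e : p ^ (n - 1) = p ^ r * p ^ (n - r - 1) := by rw [← pow_add]; congr 1; omega
    rw [e, pow_mul, hu, ← pow_mul] at h
    have h := orderOf_dvd_of_pow_eq_one h
    rw [hzo, show n - r = (n - r - 1) + 1 by omega, pow_succ, mul_comm d] at h
    exact hd (Nat.dvd_of_mul_dvd_mul_left (pow_pos hp.pos _) (by simpa using h))
  have huo := orderOf_eq_prime_pow (n := n - 1) hu2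
      (by rwa [Nat.sub_add_cancel (by omega)])
  rw [Nat.sub_add_cancel (by omega)] at huo
  refine hf (huo ▸ orderOf_dvd_of_pow_eq_one ?_)
  apply mul_right_cancel₀ hu0
  rw [← pow_succ, Nat.sub_add_cancel (Nat.one_le_pow _ _ hq.pos), huf, one_mul]

/-! ### Twisted norms in cyclotomic fields -/

/-- The twisted norm `x · σ x · ⋯ · σ^{i-1} x`, defined by `N₀ = 1` and `N_{i+1} = x · σ(N_i)`.
When `σ` has order `i` this is the relative norm of `x` down to the fixed ring of `σ`. -/
def twistedNorm {L : Type*} [CommSemiring L] (σ : L →+* L) (x : L) : ℕ → L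
  | 0 => 1
  | i + 1 => x * σ (twistedNorm σ x i)

lemma twistedNorm_mul {L : Type*} [CommSemiring L] (σ : L →+* L) (x y : L) (i : ℕ) :
    twistedNorm σ (x * y) i = twistedNorm σ x i * twistedNorm σ y i := by
  induction i with
  | zero => simp [twistedNorm]
  | succ i ih => simp only [twistedNorm, ih, map_mul]; ring

lemma map_twistedNorm {L R : Type*} [CommSemiring L] [CommSemiring R] (σ : L →+* L) (s : R →+* R)
    (ι : R →+* L) (h : ∀ y, ι (s y) = σ (ι y)) (y : R) (i : ℕ) :
    ι (twistedNorm s y i) = twistedNorm σ (ι y) i := by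
  induction i with
  | zero => simp [twistedNorm]
  | succ i ih => simp only [twistedNorm, map_mul, h, ih]

lemma map_twistedNorm_of_invariant {R F : Type*} [CommSemiring R] [CommSemiring F] (s : R →+* R)
    (φ : R →+* F) (h : ∀ y, φ (s y) = φ y) (y : R) (i : ℕ) :
    φ (twistedNorm s y i) = φ y ^ i := by
  induction i with
  | zero => simp [twistedNorm]
  | succ i ih => simp only [twistedNorm, map_mul, h, ih, pow_succ']

/-- An element `x` of the fraction field of a Dedekind domain is `y / s` or `s / y` with `s ∉ P`,
because the localization at `P` is a valuation ring. -/
lemma exists_mul_eq_of_prime {R L : Type*} [CommRing R] [IsDedekindDomain R] [Field L] [Algebra R L]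
    [IsFractionRing R L] (P : Ideal R) [P.IsPrime] (x : L) :
    ∃ y s : R, s ∉ P ∧ (x * algebraMap R L s = algebraMap R L y ∨
      x * algebraMap R L y = algebraMap R L s) := by
  obtain ⟨a, b, hb, rfl⟩ := IsFractionRing.div_surjective (A := R) x
  have hb0 : algebraMap R L b ≠ 0 :=
    IsFractionRing.to_map_ne_zero_of_mem_nonZeroDivisors hb
  have hinj : Function.Injective (algebraMap R (Localization.AtPrime P)) :=
    IsLocalization.injective _ P.primeCompl_le_nonZeroDivisors
  have : ValuationRing (Localization.AtPrime P) := by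
    rcases eq_or_ne P ⊥ with rfl | hP
    · have := IsLocalization.AtPrime.isDedekindDomain R (⊥ : Ideal R) (Localization.AtPrime (⊥ : Ideal R))
      infer_instance
    · have := IsLocalization.AtPrime.isDiscreteValuationRing_of_dedekind_domain R hP
        (Localization.AtPrime P)
      infer_instance
  obtain ⟨c, hc⟩ := ValuationRing.cond (algebraMap R (Localization.AtPrime P) a)
    (algebraMap R (Localization.AtPrime P) b)
  obtain ⟨y, s, rfl⟩ := IsLocalization.exists_mk'_eq P.primeCompl c
  refine ⟨y, s, s.2, ?_⟩
  have key : ∀ u v : R, algebraMap R (Localization.AtPrime P) u *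
      IsLocalization.mk' _ y s = algebraMap R _ v → u * y = v * s := by
    intro u v h
    rw [IsLocalization.mul_mk'_eq_mk'_of_mul, IsLocalization.mk'_eq_iff_eq_mul, ← map_mul] at h
    exact hinj h
  rcases hc with hc | hc
  · right
    have := congrArg (algebraMap R L) (key _ _ hc)
    rw [map_mul, map_mul] at this
    field_simp
    linear_combination this
  · left
    have := congrArg (algebraMap R L) (key _ _ hc)
    rw [map_mul, map_mul] at this
    field_simp
    linear_combination -this

/-- The arithmetic core. Let `L = ℚ(wz)` with `w` of order `q` and `z` of order `p ^ (n - r)`, and let `σ`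
fix `z` and send `w` to `w ^ j`. If `z ^ d` is a twisted norm of length `p ^ r`, then `p ∣ d`.
Modulo a prime `P` of `𝓞 L` above `q`, `w` becomes `1`, so `σ` acts trivially on `𝓞 L / P` and the
twisted norm becomes a `p ^ r`-th power there; moreover `𝓞 L / P` is generated by the image of `z`,
hence is fixed pointwise by `y ↦ y ^ q ^ f`. -/
lemma dvd_of_twistedNorm_eq {L : Type*} [Field L] [NumberField L] {k p q n r j f d : ℕ} [NeZero k]
    [IsCyclotomicExtension {k} ℚ L] (hp : p.Prime) (hq : q.Prime) (hpq : p ≠ q) (hr0 : 0 < r)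
    (hrn : r < n) (σ : L ≃ₐ[ℚ] L) {w z x : L} (hw : IsPrimitiveRoot w q) (hz : IsPrimitiveRoot z (p ^ (n - r)))
    (hwz : IsPrimitiveRoot (w * z) k) (hσw : σ w = w ^ j) (hσz : σ z = z)
    (hx : twistedNorm (σ : L →+* L) x (p ^ r) = z ^ d)
    (hf1 : p ^ (n - 1) ∣ q ^ f - 1) (hf2 : ¬ p ^ n ∣ q ^ f - 1) : p ∣ d := by
  have : NeZero q := ⟨hq.ne_zero⟩
  have : NeZero (p ^ (n - r)) := ⟨pow_ne_zero _ hp.ne_zero⟩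
  have := Fact.mk hq
  let O := NumberField.RingOfIntegers L
  have hqu : ¬ IsUnit (q : O) := by
    intro h
    have h1 : (algebraMap ℤ O q) = (q : O) := by simp
    rw [← h1] at h
    have h2 := (isUnit_map_iff (algebraMap ℤ O) _).mp h
    rw [Int.isUnit_iff_natAbs_eq] at h2
    exact hq.ne_one (by simpa using h2)
  obtain ⟨P, hPmax, hqP⟩ := exists_max_ideal_of_mem_nonunits hqu
  let _ : Field (O ⧸ P) := Ideal.Quotient.field P
  let φ : O →+* O ⧸ P := Ideal.Quotient.mk P
  have hφq : (q : O ⧸ P) = 0 := by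
    have : φ (q : O) = 0 := Ideal.Quotient.eq_zero_iff_mem.mpr hqP
    rwa [map_natCast] at this
  have : CharP (O ⧸ P) q := (CharP.ringChar_of_prime_eq_zero hq hφq) ▸ ringChar.charP _
  let W : O := hw.toInteger
  let Z : O := hz.toInteger
  have hW1 : φ W = 1 := by
    have h : W ^ q = 1 := hw.toInteger_isPrimitiveRoot.pow_eq_one
    have h : φ W ^ q = 1 := by rw [← map_pow, h, map_one]
    have : (φ W - 1) ^ q = 0 := by rw [sub_pow_char, h, one_pow, sub_self]
    exact sub_eq_zero.mp (pow_eq_zero_iff hq.ne_zero |>.mp this)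
  have hZ1 : φ Z ^ p ^ (n - r) = 1 := by
    rw [← map_pow, show Z ^ p ^ (n - r) = 1 from hz.toInteger_isPrimitiveRoot.pow_eq_one, map_one]
  have hZ2 : φ Z ^ p ^ (n - r - 1) ≠ 1 := by
    intro h
    have hprim : IsPrimitiveRoot (Z ^ p ^ (n - r - 1)) p :=
      hz.toInteger_isPrimitiveRoot.pow (Nat.pos_of_ne_zero (NeZero.ne _))
        (by rw [← pow_succ, Nat.sub_add_cancel (by omega)])
    have hs := congrArg φ (hprim.geom_sum_eq_zero hp.one_lt)
    simp only [map_sum, map_pow, h, one_pow, map_zero, sum_const, card_range, nsmul_eq_mul,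
      mul_one] at hs
    rw [CharP.cast_eq_zero_iff (O ⧸ P) q] at hs
    exact hpq ((Nat.prime_dvd_prime_iff_eq hq hp).mp hs).symm
  let s : O →+* O := NumberField.RingOfIntegers.mapRingHom σ
  have hs : ∀ y : O, algebraMap O L (s y) = σ (algebraMap O L y) := fun y => rfl
  have hinj : Function.Injective (algebraMap O L) := NumberField.RingOfIntegers.coe_injective
  have hsW : s W = W ^ j := hinj (by rw [hs, map_pow]; exact hσw)
  have hsZ : s Z = Z := hinj (by rw [hs]; exact hσz)
  -- `𝓞 L = ℤ[wz]`, so congruences modulo `P` need only be checked on `wz`.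
  have hint := IsCyclotomicExtension.Rat.isIntegralClosure_adjoin_singleton hwz
  have hind : ∀ y : O, φ (s y) = φ y ∧ φ y ^ q ^ f = φ y := by
    have hall : ∀ x ∈ Algebra.adjoin ℤ ({w * z} : Set L),
        ∃ y : O, algebraMap O L y = x ∧ φ (s y) = φ y ∧ φ y ^ q ^ f = φ y := by
      intro x hx
      induction hx using Algebra.adjoin_induction with
      | mem x hx =>
        rw [Set.mem_singleton_iff] at hx
        refine ⟨W * Z, by rw [hx, map_mul]; rfl, by simp [hsW, hsZ, hW1], ?_⟩
        rw [map_mul, hW1, one_mul]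
        obtain ⟨c, hc⟩ := (pow_dvd_pow p (show n - r ≤ n - 1 by omega)).trans hf1
        have : q ^ f = (p ^ (n - r)) * c + 1 := by
          rw [← hc, Nat.sub_add_cancel (Nat.one_le_pow _ _ hq.pos)]
        rw [this, pow_succ, pow_mul, hZ1, one_pow, one_mul]
      | algebraMap c =>
        refine ⟨algebraMap ℤ O c, ?_, ?_, ?_⟩
        · simp
        · simp
        · have : φ (algebraMap ℤ O c) = (c : O ⧸ P) := by simp
          rw [this, ← iterate_frobenius]
          exact map_intCast (frobenius (O ⧸ P) q ^ f) c
      | add x y _ _ hx hy =>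
        obtain ⟨x, rfl, hx1, hx2⟩ := hx
        obtain ⟨y, rfl, hy1, hy2⟩ := hy
        exact ⟨x + y, map_add _ _ _, by simp only [map_add, hx1, hy1],
          by rw [map_add, add_pow_char_pow, hx2, hy2]⟩
      | mul x y _ _ hx hy =>
        obtain ⟨x, rfl, hx1, hx2⟩ := hx
        obtain ⟨y, rfl, hy1, hy2⟩ := hy
        exact ⟨x * y, map_mul _ _ _, by simp only [map_mul, hx1, hy1],
          by rw [map_mul, mul_pow, hx2, hy2]⟩
    intro y
    obtain ⟨y', hy'⟩ := hint.isIntegral_iff.mp y.2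
    obtain ⟨y'', h1, h2⟩ := hall y' y'.2
    obtain rfl : y'' = y := hinj (h1.trans hy')
    exact h2
  obtain ⟨y, t, ht, hyt⟩ := exists_mul_eq_of_prime P x
  have hφt : φ t ≠ 0 := fun h => ht (Ideal.Quotient.eq_zero_iff_mem.mp h)
  have hnorm : ∀ y, algebraMap O L (twistedNorm s y (p ^ r)) =
      twistedNorm (σ : L →+* L) (algebraMap O L y) (p ^ r) :=
    fun y => map_twistedNorm _ s (algebraMap O L) hs y _
  have hφn : ∀ y, φ (twistedNorm s y (p ^ r)) = φ y ^ p ^ r :=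
    fun y => map_twistedNorm_of_invariant s φ (fun y => (hind y).1) y _
  have hZd : algebraMap O L (Z ^ d) = z ^ d := by rw [map_pow]; rfl
  have main : ∀ u v : O, x * algebraMap O L u = algebraMap O L v →
      φ Z ^ d * φ u ^ p ^ r = φ v ^ p ^ r := by
    intro u v h
    have h := congrArg (fun x => twistedNorm (σ : L →+* L) x (p ^ r)) h
    simp only [twistedNorm_mul, hx, ← hnorm, ← hZd, ← map_mul] at h
    have h := congrArg φ (hinj h)
    rwa [map_mul, map_pow, hφn, hφn] at h
  have hφZ : φ Z ^ d ≠ 0 := by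
    refine pow_ne_zero _ fun h => ?_
    rw [h, zero_pow (NeZero.ne _)] at hZ1
    exact zero_ne_one hZ1
  -- If `x = t / y`, then `main` shows that `y` does not vanish modulo `P` either.
  obtain ⟨u, v, hu, huv⟩ : ∃ u v : O, φ u ≠ 0 ∧ x * algebraMap O L u = algebraMap O L v := by
    rcases hyt with h | h
    · exact ⟨t, y, hφt, h⟩
    · refine ⟨y, t, fun h0 => ?_, h⟩
      have := main _ _ h
      rw [h0, zero_pow (pow_ne_zero _ hp.ne_zero), mul_zero] at this
      exact pow_ne_zero _ hφt this.symm
  refine dvd_of_pow_eq_residue (f := f) hp hq hrn hZ1 hZ2 (u := φ v / φ u) ?_ ?_ hf2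
  · rw [div_pow, div_eq_iff (pow_ne_zero _ hu), main _ _ huv]
  · rw [div_pow, (hind v).2, (hind u).2]

/-! ### Semilinear maps and eigenspaces of finite-order operators -/

/-- If the `N`-th iterate of a `σ`-semilinear map `T` on a `d`-dimensional space is the scalar `z`,
then `z ^ d` is a twisted norm: if `A` is the matrix of `T`, that of `T ^ i` is
`A · σ(A) ⋯ σ^{i-1}(A)`, and the determinant of this product is the twisted norm of `det A`. -/
lemma exists_twistedNorm_eq {L U : Type*} [Field L] [AddCommGroup U] [Module L U]
    [FiniteDimensional L U] (σ : L →+* L) (T : U →ₛₗ[σ] U) (N : ℕ) (z : L)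
    (hT : ∀ u, T^[N] u = z • u) :
    ∃ x, twistedNorm σ x N = z ^ Module.finrank L U := by
  classical
  let β := Module.finBasis L U
  let A : ℕ → Matrix _ _ L := fun i => Matrix.of fun k l => β.repr (T^[i] (β l)) k
  have hA : ∀ i, A (i + 1) = A 1 * (A i).map σ := by
    intro i
    ext k l
    have h : T^[i + 1] (β l) = ∑ m, σ (A i m l) • T (β m) := by
      rw [Function.iterate_succ_apply']
      conv_lhs => rw [← β.sum_repr (T^[i] (β l))]
      rw [map_sum]
      exact Finset.sum_congr rfl fun m _ => map_smulₛₗ T _ _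
    simp only [A, Matrix.of_apply, Matrix.mul_apply, Matrix.map_apply] at h ⊢
    rw [h]
    simp [mul_comm]
  have hdet : ∀ i, (A i).det = twistedNorm σ (A 1).det i := by
    intro i
    induction i with
    | zero =>
      have : A 0 = 1 := by
        ext k l
        simp [A, Matrix.one_apply, Finsupp.single_apply, eq_comm]
      rw [this, Matrix.det_one, twistedNorm]
    | succ i ih =>
      rw [hA, Matrix.det_mul, twistedNorm, ← ih, RingHom.map_det]
      rfl
  refine ⟨(A 1).det, ?_⟩
  rw [← hdet]
  have : A N = z • (1 : Matrix _ _ L) := by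
    ext k l
    simp [A, hT, Matrix.one_apply, Finsupp.single_apply, eq_comm]
  rw [this, Matrix.det_smul, Matrix.det_one, mul_one, Fintype.card_fin]

/-- The dimension of an eigenspace of a finite-order operator as the trace of the averaging projection
`k⁻¹ ∑ t⁻ⁱ Cⁱ` onto it. -/
lemma finrank_eigenspace_eq_sum {K V : Type*} [Field K] [CharZero K] [AddCommGroup V] [Module K V]
    [FiniteDimensional K V] {k : ℕ} (hk : k ≠ 0) (C : Module.End K V) (hC : C ^ k = 1) (t : K)
    (ht : t ^ k = 1) :
    (Module.finrank K (Module.End.eigenspace C t) : K) =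
      (k : K)⁻¹ * ∑ i ∈ range k, (t ^ i)⁻¹ * LinearMap.trace K V (C ^ i) := by
  have hk' : (k : K) ≠ 0 := Nat.cast_ne_zero.mpr hk
  have ht0 : t ≠ 0 := by
    rintro rfl
    rw [zero_pow hk] at ht
    exact zero_ne_one ht
  let e : Module.End K V := (k : K)⁻¹ • ∑ i ∈ range k, (t ^ i)⁻¹ • C ^ i
  have he : LinearMap.IsProj (Module.End.eigenspace C t) e := by
    constructor
    · intro x
      rw [Module.End.mem_eigenspace_iff]
      -- Multiplying by `C` shifts the sum cyclically, since `t ^ k = 1` and `C ^ k = 1`.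
      have h1 : C * (∑ i ∈ range k, (t ^ i)⁻¹ • C ^ i) = t • ∑ i ∈ range k, (t ^ i)⁻¹ • C ^ i := by
        have h2 := Finset.sum_range_succ (fun i => (t ^ i)⁻¹ • C ^ i) k
        rw [Finset.sum_range_succ'] at h2
        simp only [pow_zero, ht, hC, inv_one, one_smul] at h2
        have h3 := add_right_cancel h2
        conv_rhs => rw [← h3]
        rw [Finset.mul_sum, Finset.smul_sum]
        refine Finset.sum_congr rfl fun i _ => ?_
        rw [mul_smul_comm, ← pow_succ', smul_smul, pow_succ' t, mul_inv, mul_inv_cancel_left₀ ht0]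
      have h4 : C * e = t • e := by
        simp only [e]
        rw [mul_smul_comm, h1, smul_comm]
      exact congrArg (fun f : Module.End K V => f x) h4
    · intro x hx
      rw [Module.End.mem_eigenspace_iff] at hx
      have hp : ∀ i, (C ^ i) x = t ^ i • x := by
        intro i
        induction i with
        | zero => simp
        | succ i ih => rw [pow_succ', Module.End.mul_apply, ih, map_smul, hx, smul_smul, pow_succ]
      simp only [e, LinearMap.smul_apply, LinearMap.sum_apply, hp, smul_smul]
      have : ∀ i, (t ^ i)⁻¹ * t ^ i = 1 := fun i => inv_mul_cancel₀ (pow_ne_zero _ ht0)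
      simp only [this, one_smul, sum_const, card_range, ← Nat.cast_smul_eq_nsmul K, smul_smul]
      rw [inv_mul_cancel₀ hk', one_smul]
  rw [← he.trace]
  simp [e]

/-- Eigenspace dimensions of a finite-order integral operator do not depend on the field over which
they are computed, since the traces in `finrank_eigenspace_eq_sum` are compatible with base
change. -/
lemma finrank_eigenspace_baseChange {L E M : Type*} [Field L] [CharZero L] [Field E] [CharZero E]
    [Algebra L E] [AddCommGroup M] [Module ℤ M] [Module.Finite ℤ M] {k : ℕ} (hk : k ≠ 0)
    (C : Module.End ℤ M) (hC : C ^ k = 1) (t : L) (ht : t ^ k = 1) :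
    Module.finrank L (Module.End.eigenspace (C.baseChange L) t) =
      Module.finrank E (Module.End.eigenspace (C.baseChange E) (algebraMap L E t)) := by
  have htr : ∀ i, LinearMap.trace E _ ((C ^ i).baseChange E) =
      algebraMap L E (LinearMap.trace L _ ((C ^ i).baseChange L)) := by
    intro i
    rw [← LinearMap.trace_baseChange,
      ← LinearMap.trace_conj' _ (TensorProduct.AlgebraTensorModule.cancelBaseChange ℤ L E E M)]
    congr 1
    ext x
    simp
  have h1 := finrank_eigenspace_eq_sum hk (C.baseChange L)
    (by rw [← LinearMap.baseChange_pow, hC]; exact LinearMap.baseChange_id) t ht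
  have h2 := finrank_eigenspace_eq_sum hk (C.baseChange E)
    (by rw [← LinearMap.baseChange_pow, hC]; exact LinearMap.baseChange_id) (algebraMap L E t)
    (by rw [← map_pow, ht, map_one])
  have h3 := congrArg (algebraMap L E) h1
  simp only [← LinearMap.baseChange_pow, htr] at h2 h3
  simp only [map_mul, map_inv₀, map_sum, map_pow, map_natCast] at h3
  rw [← h3] at h2
  exact_mod_cast h2.symm

/-- The inverse of a finite-order complex operator has the conjugate trace: the operator is
diagonalizable and its eigenvalues are roots of unity. -/
lemma trace_conj_of_finite_order {V : Type*} [AddCommGroup V] [Module ℂ V] [FiniteDimensional ℂ V]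
    {N : ℕ} (hN : N ≠ 0) (f g : Module.End ℂ V) (hf : f ^ N = 1) (hgf : g * f = 1) :
    LinearMap.trace ℂ V g = starRingEnd ℂ (LinearMap.trace ℂ V f) := by
  classical
  have hss : f.IsSemisimple := by
    refine Module.End.isSemisimple_of_squarefree_aeval_eq_zero
      (p := Polynomial.X ^ N - 1) ?_ (by simp [hf])
    have := (Polynomial.separable_X_pow_sub_C (1 : ℂ) (Nat.cast_ne_zero.mpr hN) one_ne_zero)
    simpa using this.squarefree
  have htop : ⨆ μ, f.eigenspace μ = ⊤ := by
    rw [← Module.End.iSup_maxGenEigenspace_eq_top f]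
    exact iSup_congr fun μ => (hss.isFinitelySemisimple.maxGenEigenspace_eq_eigenspace μ).symm
  have hint : DirectSum.IsInternal f.eigenspace :=
    (DirectSum.isInternal_submodule_iff_iSupIndep_and_iSup_eq_top _).mpr
      ⟨f.eigenspaces_iSupIndep, htop⟩
  have hfin : {μ | f.eigenspace μ ≠ ⊥}.Finite :=
    WellFoundedGT.finite_ne_bot_of_iSupIndep f.eigenspaces_iSupIndep
  have hgx : ∀ μ, ∀ x ∈ f.eigenspace μ, g x = (starRingEnd ℂ μ) • x := by
    intro μ x hx
    have hx' := Module.End.mem_eigenspace_iff.mp hx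
    rcases eq_or_ne x 0 with rfl | hx0
    · simp
    have hp : ∀ i, (f ^ i) x = μ ^ i • x := by
      intro i
      induction i with
      | zero => simp
      | succ i ih => rw [pow_succ', Module.End.mul_apply, ih, map_smul, hx', smul_smul, pow_succ]
    have h1 : μ ^ N = 1 := by
      have := hp N
      rw [hf, Module.End.one_apply] at this
      exact smul_left_injective ℂ hx0 (by simpa using this.symm)
    have h2 : starRingEnd ℂ μ * μ = 1 := by
      rw [mul_comm, Complex.mul_conj, Complex.normSq_eq_norm_sq, Complex.norm_eq_one_of_pow_eq_one h1 hN]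
      simp
    have h3 : μ • g x = x := by
      rw [← map_smul, ← hx', ← Module.End.mul_apply, hgf, Module.End.one_apply]
    rw [← h3, smul_smul, h3, h2, one_smul]
  have hmf : ∀ μ, Set.MapsTo f (f.eigenspace μ) (f.eigenspace μ) := fun μ x hx => by
    rw [SetLike.mem_coe] at hx ⊢
    rw [Module.End.mem_eigenspace_iff.mp hx]
    exact Submodule.smul_mem _ _ hx
  have hmg : ∀ μ, Set.MapsTo g (f.eigenspace μ) (f.eigenspace μ) := fun μ x hx => by
    rw [SetLike.mem_coe] at hx ⊢
    rw [hgx μ x hx]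
    exact Submodule.smul_mem _ _ hx
  rw [LinearMap.trace_eq_sum_trace_restrict' hint hfin hmf,
    LinearMap.trace_eq_sum_trace_restrict' hint hfin hmg, map_sum]
  refine Finset.sum_congr rfl fun μ _ => ?_
  have e1 : f.restrict (hmf μ) = μ • 1 := by
    ext x
    exact Module.End.mem_eigenspace_iff.mp x.2
  have e2 : g.restrict (hmg μ) = (starRingEnd ℂ μ) • 1 := by
    ext x
    exact hgx μ x x.2
  rw [e1, e2]
  simp

/-! ### Irreducible representations generated by an eigenvector -/

lemma stable_of_closure {k G V : Type*} [Field k] [Group G] [Finite G] [AddCommGroup V] [Module k V]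
    (ρ : Representation k G V) (p : Submodule k V) {S : Set G} (hS : Subgroup.closure S = ⊤)
    (h : ∀ s ∈ S, ∀ x ∈ p, ρ s x ∈ p) (g : G) : ∀ x ∈ p, ρ g x ∈ p := by
  have hg : g ∈ Subgroup.closure S := hS ▸ Subgroup.mem_top g
  induction hg using Subgroup.closure_induction with
  | mem s hs => exact h s hs
  | one => simp
  | mul a b _ _ ha hb =>
    intro x hx
    rw [map_mul]
    exact ha _ (hb _ hx)
  | inv a _ ha =>
    have hpow : ∀ i : ℕ, ∀ x ∈ p, ρ (a ^ i) x ∈ p := by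
      intro i
      induction i with
      | zero => simp
      | succ i ih =>
        intro x hx
        rw [pow_succ', map_mul]
        exact ha _ (ih _ hx)
    have : a⁻¹ = a ^ (orderOf a - 1) := by
      rw [inv_eq_iff_mul_eq_one, ← pow_succ', Nat.sub_add_cancel (orderOf_pos a), pow_orderOf_eq_one]
    rw [this]
    exact hpow _

lemma eq_bot_or_eq_top_of_simple {k G : Type} [Field k] [Group G] (τ : FDRep k G) [Simple τ]
    (p : Submodule k τ) (hp : ∀ g, ∀ x ∈ p, τ.ρ g x ∈ p) : p = ⊥ ∨ p = ⊤ := by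
  let ρ' : Representation k G p :=
    { toFun := fun g => (τ.ρ g).restrict (hp g)
      map_one' := by ext; simp
      map_mul' := fun a b => by ext; simp }
  let i : FDRep.of ρ' ⟶ τ :=
    ⟨FGModuleCat.ofHom p.subtype, fun g => by ext x; rfl⟩
  have hi : ∀ x : p, i.hom.hom.hom x = (x : τ) := fun x => rfl
  have hmono : Mono i := by
    have : Mono ((forget₂ (FDRep k G) (FGModuleCat k)).map i) := by
      apply ConcreteCategory.mono_of_injective
      exact p.injective_subtype
    exact (forget₂ (FDRep k G) (FGModuleCat k)).mono_of_mono_map this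
  by_cases h0 : i = 0
  · left
    rw [eq_bot_iff]
    intro x hx
    have := hi ⟨x, hx⟩
    rw [h0] at this
    exact this.symm
  · right
    have := isIso_of_mono_of_nonzero h0
    rw [eq_top_iff]
    intro y _
    let e := FDRep.isoToLinearEquiv (asIso i)
    have : e (e.symm y) = y := e.apply_symm_apply y
    rw [← this]
    exact (show (FDRep.of ρ' : Type) from e.symm y : p).2

lemma rep_pow_apply {k G V : Type*} [Field k] [Group G] [AddCommGroup V] [Module k V]
    (ρ : Representation k G V) {h : G} {t : k} {v : V} (hv : ρ h v = t • v) (i : ℕ) :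
    ρ (h ^ i) v = t ^ i • v := by
  induction i with
  | zero => simp
  | succ i ih => rw [pow_succ', map_mul, Module.End.mul_apply, ih, map_smul, hv, smul_smul, pow_succ]

lemma pow_mul_eq {G : Type*} [Group G] {h b : G} {c : ℕ} (hb : h * b = b * h ^ c) (i : ℕ) :
    h ^ i * b = b * (h ^ i) ^ c := by
  induction i with
  | zero => simp
  | succ i ih => rw [pow_succ, mul_assoc, hb, ← mul_assoc, ih, mul_assoc,
      (Commute.pow_self h i).mul_pow]

/-- In a faithful irreducible representation of `G = ⟨h, b⟩`, where `b⁻¹ h b = h ^ c`, the eigenvalues of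
`h` have the same order as `h`: if `θ ^ l = 1`, then the fixed space of `h ^ l` is a nonzero
subrepresentation, hence everything, and so `h ^ l = 1`. -/
lemma exists_eigenvector {G V : Type*} [Group G] [Finite G] [AddCommGroup V] [Module ℂ V]
    [FiniteDimensional ℂ V] [Nontrivial V] (ρ : Representation ℂ G V) (hρ : Function.Injective ρ)
    (hirr : ∀ p : Submodule ℂ V, (∀ g, ∀ x ∈ p, ρ g x ∈ p) → p = ⊥ ∨ p = ⊤)
    {h b : G} (hgen : Subgroup.closure {h, b} = ⊤) {c : ℕ} (hb : h * b = b * h ^ c) :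
    ∃ θ : ℂ, ∃ v : V, v ≠ 0 ∧ ρ h v = θ • v ∧ IsPrimitiveRoot θ (orderOf h) := by
  obtain ⟨θ, hθ⟩ := Module.End.exists_eigenvalue (ρ h)
  obtain ⟨v, hv⟩ := hθ.exists_hasEigenvector
  have hv1 : ρ h v = θ • v := hv.apply_eq_smul
  have hp := rep_pow_apply ρ hv1
  refine ⟨θ, v, hv.2, hv1, ?_, ?_⟩
  · have := hp (orderOf h)
    rw [pow_orderOf_eq_one, map_one, Module.End.one_apply] at this
    exact smul_left_injective ℂ hv.2 (by simpa using this.symm)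
  · intro l hl
    have hbl := pow_mul_eq hb
    let p : Submodule ℂ V := LinearMap.eqLocus (ρ (h ^ l)) LinearMap.id
    have hmem : ∀ x, x ∈ p ↔ ρ (h ^ l) x = x := fun x => Iff.rfl
    have hpb := hirr p (stable_of_closure ρ p hgen (by
      intro s hs x hx
      rw [hmem] at hx ⊢
      rcases hs with rfl | hs
      · rw [← Module.End.mul_apply, ← map_mul, (Commute.pow_self s l).eq, map_mul,
          Module.End.mul_apply, hx]
      · rw [Set.mem_singleton_iff] at hs
        subst hs
        rw [← Module.End.mul_apply, ← map_mul, hbl, map_mul, Module.End.mul_apply]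
        congr 1
        generalize c = c
        induction c with
        | zero => simp
        | succ c ih => rw [pow_succ, map_mul, Module.End.mul_apply, hx, ih]))
    have hvp : v ∈ p := by rw [hmem, hp, hl, one_smul]
    rcases hpb with h0 | h1
    · rw [h0] at hvp
      exact absurd ((Submodule.mem_bot ℂ).mp hvp) hv.2
    · apply orderOf_dvd_of_pow_eq_one
      apply hρ
      ext x
      rw [map_one, Module.End.one_apply]
      exact (hmem x).mp (h1 ▸ Submodule.mem_top)

/-- The multiplicity of an irreducible `ρ` in `σ` as an eigenspace dimension. The vectors `bⁱ v`,
`i < N`, are eigenvectors of `h` for the distinct eigenvalues `θ ^ c ^ i`, so they form a basis of `V`, and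
an intertwiner is determined by the image of `v`, which may be any `θ`-eigenvector of `σ h`. -/
lemma finrank_intertwiningMap {G V W : Type*} [Group G] [Finite G] [AddCommGroup V] [Module ℂ V]
    [FiniteDimensional ℂ V] [AddCommGroup W] [Module ℂ W] (ρ : Representation ℂ G V)
    (σ : Representation ℂ G W)
    (hirr : ∀ p : Submodule ℂ V, (∀ g, ∀ x ∈ p, ρ g x ∈ p) → p = ⊥ ∨ p = ⊤)
    {h b : G} (hgen : Subgroup.closure {h, b} = ⊤) {c N m : ℕ} (hN : 0 < N) (hb : h * b = b * h ^ c)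
    (hbN : b ^ N = h ^ m) {θ : ℂ} {v : V} (hv0 : v ≠ 0) (hv : ρ h v = θ • v)
    (hinj : ∀ i < N, ∀ l < N, θ ^ c ^ i = θ ^ c ^ l → i = l) :
    Module.finrank ℂ (Representation.IntertwiningMap ρ σ) =
      Module.finrank ℂ (Module.End.eigenspace (σ h) θ) := by
  have hbi : ∀ i : ℕ, h * b ^ i = b ^ i * h ^ c ^ i := by
    intro i
    induction i with
    | zero => simp
    | succ i ih => rw [pow_succ, ← mul_assoc, ih, mul_assoc, pow_mul_eq hb, ← pow_mul, ← pow_succ, mul_assoc]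
  have heig : ∀ i, ρ h (ρ (b ^ i) v) = θ ^ c ^ i • ρ (b ^ i) v := by
    intro i
    rw [← Module.End.mul_apply, ← map_mul, hbi, map_mul, Module.End.mul_apply,
      rep_pow_apply ρ hv, map_smul]
  have hinjb : ∀ i, ρ (b ^ i) v ≠ 0 := by
    intro i h0
    apply hv0
    have := congrArg (ρ (b ^ i)⁻¹) h0
    rwa [map_zero, ← Module.End.mul_apply, ← map_mul, inv_mul_cancel, map_one,
      Module.End.one_apply] at this
  have hli : LinearIndependent ℂ fun i : Fin N => ρ (b ^ (i : ℕ)) v :=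
    Module.End.eigenvectors_linearIndependent' (ρ h) (fun i : Fin N => θ ^ c ^ (i : ℕ))
      (fun i l h => Fin.ext (hinj i i.2 l l.2 h)) _
      fun i => ⟨Module.End.mem_eigenspace_iff.mpr (heig i), hinjb i⟩
  have hspan : ⊤ ≤ Submodule.span ℂ (Set.range fun i : Fin N => ρ (b ^ (i : ℕ)) v) := by
    have hstab := stable_of_closure ρ
      (Submodule.span ℂ (Set.range fun i : Fin N => ρ (b ^ (i : ℕ)) v)) hgen (by
      intro s hs x hx
      rw [← Submodule.mem_comap]
      revert x
      rw [← SetLike.le_def, Submodule.span_le]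
      rintro _ ⟨i, rfl⟩
      simp only [SetLike.mem_coe, Submodule.mem_comap]
      rcases hs with rfl | hs
      · rw [heig]
        exact Submodule.smul_mem _ _ (Submodule.subset_span ⟨i, rfl⟩)
      · rw [Set.mem_singleton_iff] at hs
        subst hs
        rw [← Module.End.mul_apply, ← map_mul, ← pow_succ']
        rcases Nat.lt_or_ge (i + 1) N with hi | hi
        · exact Submodule.subset_span ⟨⟨i + 1, hi⟩, rfl⟩
        · rw [show (i : ℕ) + 1 = N by omega, hbN, rep_pow_apply ρ hv]
          exact Submodule.smul_mem _ _ (Submodule.subset_span ⟨⟨0, hN⟩, by simp⟩))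
    rcases hirr _ hstab with h0 | h1
    · have : v ∈ Submodule.span ℂ (Set.range fun i : Fin N => ρ (b ^ (i : ℕ)) v) :=
        Submodule.subset_span ⟨⟨0, hN⟩, by simp⟩
      rw [h0] at this
      exact absurd ((Submodule.mem_bot ℂ).mp this) hv0
    · exact h1.ge
  let β : Module.Basis (Fin N) ℂ V := Module.Basis.mk hli hspan
  have hβ : ∀ i, β i = ρ (b ^ (i : ℕ)) v := fun i => Module.Basis.mk_apply hli hspan i
  let ev : Representation.IntertwiningMap ρ σ →ₗ[ℂ] Module.End.eigenspace (σ h) θ :=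
    { toFun := fun f => ⟨f v, by
        rw [Module.End.mem_eigenspace_iff, ← f.isIntertwining, hv, map_smul]⟩
      map_add' := fun f g => rfl
      map_smul' := fun a f => rfl }
  have hev : ∀ f, (ev f : W) = f v := fun f => rfl
  refine (LinearEquiv.ofBijective ev ⟨?_, ?_⟩).finrank_eq
  · rw [← LinearMap.ker_eq_bot, LinearMap.ker_eq_bot']
    intro f hf
    have hf' : f v = 0 := by rw [← hev, hf]; rfl
    apply Representation.IntertwiningMap.ext
    refine β.ext fun i => ?_
    rw [hβ]
    change f (ρ (b ^ (i : ℕ)) v) = 0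
    rw [f.isIntertwining, hf', map_zero]
  · rintro ⟨w, hw⟩
    rw [Module.End.mem_eigenspace_iff] at hw
    let F : V →ₗ[ℂ] W := β.constr ℂ fun i : Fin N => σ (b ^ (i : ℕ)) w
    have hF : ∀ i : Fin N, F (ρ (b ^ (i : ℕ)) v) = σ (b ^ (i : ℕ)) w := by
      intro i
      rw [← hβ]
      exact β.constr_basis ℂ _ i
    have hFv : F v = w := by simpa using hF ⟨0, hN⟩
    have hheig : ∀ i, σ h (σ (b ^ i) w) = θ ^ c ^ i • σ (b ^ i) w := by
      intro i
      rw [← Module.End.mul_apply, ← map_mul, hbi, map_mul, Module.End.mul_apply,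
        rep_pow_apply σ hw, map_smul]
    have hFg : ∀ g, F ∘ₗ ρ g = σ g ∘ₗ F := by
      intro g
      have hg : g ∈ Subgroup.closure {h, b} := hgen ▸ Subgroup.mem_top g
      induction hg using Subgroup.closure_induction with
      | mem s hs =>
        refine β.ext fun i => ?_
        rw [LinearMap.comp_apply, LinearMap.comp_apply, hβ, hF]
        rcases hs with rfl | hs
        · rw [heig, map_smul, hF, hheig]
        · rw [Set.mem_singleton_iff] at hs
          subst hs
          rw [← Module.End.mul_apply, ← map_mul, ← Module.End.mul_apply, ← map_mul, ← pow_succ']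
          rcases Nat.lt_or_ge (i + 1) N with hi | hi
          · exact hF ⟨i + 1, hi⟩
          · rw [show (i : ℕ) + 1 = N by omega, hbN, rep_pow_apply ρ hv, rep_pow_apply σ hw,
              map_smul, hFv]
      | one => ext; simp
      | mul x y _ _ hx hy =>
        ext u
        have h1 := LinearMap.congr_fun hx (ρ y u)
        have h2 := LinearMap.congr_fun hy u
        simp only [LinearMap.comp_apply, map_mul, Module.End.mul_apply] at h1 h2 ⊢
        rw [h1, h2]
      | inv x _ hx =>
        ext u
        have h1 := LinearMap.congr_fun hx (ρ x⁻¹ u)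
        simp only [LinearMap.comp_apply] at h1 ⊢
        have h2 : ρ x (ρ x⁻¹ u) = u := by
          rw [← Module.End.mul_apply, ← map_mul]; simp
        rw [h2] at h1
        rw [h1, ← Module.End.mul_apply, ← map_mul]
        simp
    refine ⟨⟨F, fun g => hFg g⟩, Subtype.ext ?_⟩
    rw [hev]
    exact hFv

/-! ### Divisibility of the eigenspace dimension -/

lemma IsPrimitiveRoot.pow_eq_pow_of_modEq {K : Type*} [Field K] {k i l : ℕ} {t : K}
    (ht : IsPrimitiveRoot t k) (h : i ≡ l [MOD k]) : t ^ i = t ^ l := by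
  rw [← pow_mod_orderOf t i, ← pow_mod_orderOf t l, ← ht.eq_orderOf, h]

lemma exists_cyclotomic_aut {L : Type*} [Field L] [NumberField L] {k c : ℕ} [NeZero k]
    [IsCyclotomicExtension {k} ℚ L] {t : L} (ht : IsPrimitiveRoot t k) (hc : c.Coprime k) :
    ∃ σ : L ≃ₐ[ℚ] L, σ t = t ^ c := by
  have ht' := ht.pow_of_coprime c hc
  refine ⟨(ht.powerBasis ℚ).equivOfMinpoly (ht'.powerBasis ℚ) ?_, ?_⟩
  · rw [ht.powerBasis_gen ℚ, ht'.powerBasis_gen ℚ,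
      ← Polynomial.cyclotomic_eq_minpoly_rat ht (NeZero.pos k),
      ← Polynomial.cyclotomic_eq_minpoly_rat ht' (NeZero.pos k)]
  · have := (ht.powerBasis ℚ).equivOfMinpoly_gen (ht'.powerBasis ℚ) (by
      rw [ht.powerBasis_gen ℚ, ht'.powerBasis_gen ℚ,
        ← Polynomial.cyclotomic_eq_minpoly_rat ht (NeZero.pos k),
        ← Polynomial.cyclotomic_eq_minpoly_rat ht' (NeZero.pos k)])
    exact (congrArg _ (ht.powerBasis_gen ℚ).symm).trans (this.trans (ht'.powerBasis_gen ℚ))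

/-- On `L ⊗ M` with `L = ℚ(t)`, the `σ`-semilinear map `T = b ∘ (σ ⊗ 1)` preserves the `t`-eigenspace of
`h`: conjugation by `b` and the Galois action `t ↦ t ^ c` compensate each other. As `σ ^ N = 1`,
`T ^ N` is `b ^ N = h ^ m`, which acts there as the scalar `t ^ m`. -/
lemma exists_twistedNorm_eq_of_rep {L G M : Type*} [Field L] [NumberField L] {k c c' m N : ℕ}
    [NeZero k] [IsCyclotomicExtension {k} ℚ L] [Group G] [AddCommGroup M] [Module ℤ M]
    [Module.Finite ℤ M] (ρ : Representation ℤ G M) {h b : G} (hb : h * b = b * h ^ c')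
    (hbN : b ^ N = h ^ m) {t : L} (ht : IsPrimitiveRoot t k) (σ : L ≃ₐ[ℚ] L) (hσ : σ t = t ^ c)
    (hcc : c * c' ≡ 1 [MOD k]) (hcN : c ^ N ≡ 1 [MOD k]) :
    ∃ x, twistedNorm (σ : L →+* L) x N =
      (t ^ m) ^ Module.finrank L (Module.End.eigenspace ((ρ h).baseChange L) t) := by
  let π : Representation L G (L ⊗[ℤ] M) :=
    (Module.End.baseChangeHom ℤ L M : Module.End ℤ M →* Module.End L (L ⊗[ℤ] M)).comp ρ
  have hπ : ∀ g, π g = (ρ g).baseChange L := fun g => rfl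
  let S : L ⊗[ℤ] M →ₗ[ℤ] L ⊗[ℤ] M :=
    LinearMap.rTensor M (σ : L →+ L).toIntLinearMap
  have hStmul : ∀ (l : L) (y : M), S (l ⊗ₜ y) = σ l ⊗ₜ y := fun l y => rfl
  have hSsmul : ∀ (l : L) (x : L ⊗[ℤ] M), S (l • x) = σ l • S x := by
    intro l x
    induction x with
    | zero => simp
    | tmul l' y => rw [TensorProduct.smul_tmul', hStmul, hStmul, TensorProduct.smul_tmul',
        smul_eq_mul, smul_eq_mul, map_mul]
    | add x y hx hy => rw [smul_add, map_add, map_add, smul_add, hx, hy]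
  have hSπ : ∀ g x, S (π g x) = π g (S x) := by
    intro g x
    induction x with
    | zero => simp
    | tmul l' y => rfl
    | add x y hx hy => rw [map_add, map_add, map_add, map_add, hx, hy]
  have hσN : ∀ l, σ^[N] l = l := by
    have h1 : ∀ i, (σ : L → L)^[i] t = t ^ c ^ i := by
      intro i
      induction i with
      | zero => simp
      | succ i ih => rw [Function.iterate_succ_apply', ih, map_pow, hσ, ← pow_mul, pow_succ']
    have h2 : ((σ ^ N : L ≃ₐ[ℚ] L) : L →ₐ[ℚ] L) = AlgHom.id ℚ L := by
      apply (ht.powerBasis ℚ).algHom_ext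
      rw [ht.powerBasis_gen ℚ]
      change (σ ^ N) t = t
      rw [AlgEquiv.coe_pow, h1]
      conv_rhs => rw [← pow_one t]
      exact ht.pow_eq_pow_of_modEq hcN
    intro l
    have := DFunLike.congr_fun h2 l
    rw [← AlgEquiv.coe_pow]
    exact this
  have hSN : ∀ x, S^[N] x = x := by
    have h1 : ∀ i (l : L) (y : M), S^[i] (l ⊗ₜ y) = (σ^[i] l) ⊗ₜ y := by
      intro i l y
      induction i with
      | zero => rfl
      | succ i ih => rw [Function.iterate_succ_apply', Function.iterate_succ_apply', ih, hStmul]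
    intro x
    rw [← Module.End.coe_pow]
    induction x with
    | zero => simp
    | tmul l y => rw [Module.End.coe_pow, h1, hσN]
    | add x y hx hy => rw [map_add, hx, hy]
  let U := Module.End.eigenspace (π h) t
  have hU : ∀ x, x ∈ U ↔ π h x = t • x := fun x => Module.End.mem_eigenspace_iff
  have hstab : ∀ x ∈ U, π b (S x) ∈ U := by
    intro x hx
    rw [hU] at hx ⊢
    rw [← Module.End.mul_apply, ← map_mul, hb, map_mul, Module.End.mul_apply]
    have h1 : π h (S x) = σ t • S x := by rw [← hSπ, hx, hSsmul]
    rw [rep_pow_apply π h1, map_smul, hσ, ← pow_mul]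
    congr 1
    conv_rhs => rw [← pow_one t]
    exact ht.pow_eq_pow_of_modEq hcc
  let T : U →ₛₗ[(σ : L →+* L)] U :=
    { toFun := fun x => ⟨π b (S x), hstab x x.2⟩
      map_add' := fun x y => Subtype.ext (by simp)
      map_smul' := fun l x => Subtype.ext (by
        change π b (S (l • (x : L ⊗[ℤ] M))) = σ l • π b (S x)
        rw [hSsmul, map_smul]) }
  have hT : ∀ i (x : U), ((T^[i] x : U) : L ⊗[ℤ] M) = π (b ^ i) (S^[i] (x : L ⊗[ℤ] M)) := by
    intro i x
    induction i with
    | zero => simp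
    | succ i ih =>
      rw [Function.iterate_succ_apply', Function.iterate_succ_apply', pow_succ', map_mul,
        Module.End.mul_apply, ← hSπ, ← ih]
      rfl
  have hTN : ∀ u : U, T^[N] u = t ^ m • u := by
    intro u
    apply Subtype.ext
    rw [hT, hSN, hbN, rep_pow_apply π ((hU _).mp u.2)]
    rfl
  exact exists_twistedNorm_eq (σ : L →+* L) T N (t ^ m) hTN

/-- Galois descent (`exists_twistedNorm_eq_of_rep`) combined with `dvd_of_twistedNorm_eq`.
The exponents `g` and `m` split a root of unity `t` of order `q * p ^ (n - r)` into its `q`-part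
`t ^ g` and its `p`-part `t ^ m`. -/
lemma dvd_finrank_eigenspace {G M : Type*} [Group G] [AddCommGroup M] [Module ℤ M]
    [Module.Finite ℤ M] (ρ : Representation ℤ G M) {p q n r f c c' m g : ℕ}
    (hp : p.Prime) (hq : q.Prime) (hpq : p ≠ q) (hr0 : 0 < r) (hrn : r < n)
    (hf1 : p ^ (n - 1) ∣ q ^ f - 1) (hf2 : ¬ p ^ n ∣ q ^ f - 1)
    {h b : G} (hh : h ^ (q * p ^ (n - r)) = 1) (hb : h * b = b * h ^ c')
    (hbN : b ^ p ^ r = h ^ m)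
    (hcc : c * c' ≡ 1 [MOD q * p ^ (n - r)]) (hcN : c ^ p ^ r ≡ 1 [MOD q * p ^ (n - r)])
    (hc1 : c ≡ 1 [MOD p ^ (n - r)])
    (hg1 : g ≡ 1 [MOD q]) (hg2 : g ≡ 0 [MOD p ^ (n - r)])
    (hm1 : m ≡ 0 [MOD q]) (hm2 : m ≡ 1 [MOD p ^ (n - r)])
    {θ : ℂ} (hθ : IsPrimitiveRoot θ (q * p ^ (n - r))) :
    p ∣ Module.finrank ℂ (Module.End.eigenspace ((ρ h).baseChange ℂ) θ) := by
  have hkpos : 0 < q * p ^ (n - r) := Nat.mul_pos hq.pos (pow_pos hp.pos _)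
  have hcop : q.Coprime (p ^ (n - r)) :=
    Nat.Coprime.pow_right _ ((Nat.coprime_primes hq hp).mpr hpq.symm)
  generalize hk : q * p ^ (n - r) = k at *
  have : NeZero k := ⟨hkpos.ne'⟩
  let L := CyclotomicField k ℚ
  have hcyc : IsCyclotomicExtension {k} ℚ L := CyclotomicField.isCyclotomicExtension k ℚ
  let t : L := IsCyclotomicExtension.zeta k ℚ L
  have ht : IsPrimitiveRoot t k := IsCyclotomicExtension.zeta_spec k ℚ L
  let ι : L →ₐ[ℚ] ℂ := (ht.powerBasis ℚ).lift θ (by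
    rw [ht.powerBasis_gen ℚ, ← Polynomial.cyclotomic_eq_minpoly_rat ht hkpos,
      Polynomial.aeval_def, Polynomial.eval₂_eq_eval_map, Polynomial.map_cyclotomic]
    exact hθ.isRoot_cyclotomic hkpos)
  let _ : Algebra L ℂ := ι.toRingHom.toAlgebra
  have htθ : algebraMap L ℂ t = θ := by
    have h1 : ι (ht.powerBasis ℚ).gen = θ := (ht.powerBasis ℚ).lift_gen θ _
    rw [ht.powerBasis_gen ℚ] at h1
    exact h1
  have htpow : ∀ {i l : ℕ}, i ≡ l [MOD k] → t ^ i = t ^ l := ht.pow_eq_pow_of_modEq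
  have hck : c.Coprime k := by
    have h1 : Nat.gcd (c * c') k = Nat.gcd 1 k := hcc.gcd_eq
    rw [Nat.gcd_one_left] at h1
    exact Nat.Coprime.coprime_mul_right h1
  obtain ⟨σ, hσ⟩ := exists_cyclotomic_aut ht hck
  rw [← htθ, ← finrank_eigenspace_baseChange (L := L) (E := ℂ) hkpos.ne' (ρ h)
    (by rw [← map_pow, hh, map_one]) t ht.pow_eq_one]
  obtain ⟨x, hx⟩ := exists_twistedNorm_eq_of_rep ρ hb hbN ht σ hσ hcc hcN
  have hcrt : ∀ {i l : ℕ}, i ≡ l [MOD q] → i ≡ l [MOD p ^ (n - r)] → i ≡ l [MOD k] := by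
    intro i l h1 h2
    rw [← hk]
    exact (Nat.modEq_and_modEq_iff_modEq_mul hcop).mp ⟨h1, h2⟩
  obtain ⟨g', hg'⟩ := (Nat.modEq_zero_iff_dvd).mp hg2
  obtain ⟨m', hm'⟩ := (Nat.modEq_zero_iff_dvd).mp hm1
  have hw : IsPrimitiveRoot (t ^ g) q := by
    rw [hg', pow_mul]
    refine (ht.pow hkpos (by rw [← hk, mul_comm])).pow_of_coprime _ ?_
    have h1 : Nat.gcd g q = Nat.gcd 1 q := hg1.gcd_eq
    rw [Nat.gcd_one_left, hg'] at h1
    exact Nat.Coprime.coprime_mul_left h1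
  have hz : IsPrimitiveRoot (t ^ m) (p ^ (n - r)) := by
    rw [hm', pow_mul]
    refine (ht.pow hkpos hk.symm).pow_of_coprime _ ?_
    have h1 : Nat.gcd m (p ^ (n - r)) = Nat.gcd 1 (p ^ (n - r)) := hm2.gcd_eq
    rw [Nat.gcd_one_left, hm'] at h1
    exact Nat.Coprime.coprime_mul_left h1
  refine dvd_of_twistedNorm_eq (k := k) (j := c) hp hq hpq hr0 hrn σ hw hz ?_ ?_ ?_ hx hf1 hf2
  · rw [← pow_add, htpow (hcrt (hg1.add hm1) (hg2.add hm2)), pow_one]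
    exact ht
  · rw [map_pow, hσ, ← pow_mul, ← pow_mul, mul_comm]
  · rw [map_pow, hσ, ← pow_mul]
    refine htpow (hcrt ?_ ?_)
    · exact (hm1.mul_left c).trans (by rw [mul_zero]; exact hm1.symm)
    · simpa using hc1.mul_right m

/-! ### The group and the multiplicity -/

/-- The element `h = a * b ^ p ^ r` generates a normal subgroup containing `a`, and `G = ⟨h, b⟩`. Here
`c` lifts `j` and `c'` lifts `j⁻¹` from `ℤ/q` to `ℤ/(q * p ^ (n - r))`, both being `1` modulo
`p ^ (n - r)`; the last clause says that `c'` has order `p ^ r` modulo `q`. -/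
lemma exists_cyclic_generator {G : Type*} [Group G] {a b : G} {p q n r j : ℕ} (hp : p.Prime)
    (hq : q.Prime) (hpq : p ≠ q) (hrn : r ≤ n) (ha : orderOf a = q)
    (hb : orderOf b = p ^ n) (hba : b * a * b⁻¹ = a ^ j) (hj : orderOf (j : ZMod q) = p ^ r)
    (hgen : Subgroup.closure {a, b} = ⊤) :
    ∃ h : G, ∃ c c' g m : ℕ, orderOf h = q * p ^ (n - r) ∧ Subgroup.closure {h, b} = ⊤ ∧
      h * b = b * h ^ c' ∧ b ^ p ^ r = h ^ m ∧
      c * c' ≡ 1 [MOD q * p ^ (n - r)] ∧ c ^ p ^ r ≡ 1 [MOD q * p ^ (n - r)] ∧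
      c ≡ 1 [MOD p ^ (n - r)] ∧ g ≡ 1 [MOD q] ∧ g ≡ 0 [MOD p ^ (n - r)] ∧
      m ≡ 0 [MOD q] ∧ m ≡ 1 [MOD p ^ (n - r)] ∧
      ∀ i < p ^ r, ∀ l < p ^ r, c' ^ i ≡ c' ^ l [MOD q] → i = l := by
  have hcop : q.Coprime (p ^ (n - r)) :=
    Nat.Coprime.pow_right _ ((Nat.coprime_primes hq hp).mpr hpq.symm)
  have hN : 0 < p ^ r := pow_pos hp.pos r
  have hcrt : ∀ {i l : ℕ}, i ≡ l [MOD q] → i ≡ l [MOD p ^ (n - r)] →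
      i ≡ l [MOD q * p ^ (n - r)] :=
    fun h1 h2 => (Nat.modEq_and_modEq_iff_modEq_mul hcop).mp ⟨h1, h2⟩
  have hjN : j ^ p ^ r ≡ 1 [MOD q] := by
    rw [← ZMod.natCast_eq_natCast_iff, Nat.cast_pow, ← hj, pow_orderOf_eq_one, Nat.cast_one]
  have hba' : b * a = a ^ j * b := by rw [← hba]; group
  have hbai : ∀ i l : ℕ, b ^ i * a ^ l = a ^ (l * j ^ i) * b ^ i := by
    have h1 : ∀ l : ℕ, b * a ^ l = a ^ (l * j) * b := by
      intro l
      rw [mul_comm l, pow_mul, ← hba, conj_pow]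
      group
    intro i
    induction i with
    | zero => simp
    | succ i ih =>
      intro l
      rw [pow_succ, mul_assoc, h1, ← mul_assoc, ih, mul_assoc, mul_assoc l, ← pow_succ']
  have haq : ∀ {i l : ℕ}, i ≡ l [MOD q] → a ^ i = a ^ l := by
    intro i l h
    rw [pow_eq_pow_iff_modEq, ha]
    exact h
  obtain ⟨z, hz⟩ : ∃ z, z = b ^ p ^ r := ⟨_, rfl⟩
  have hza : Commute a z := by
    have h1 := hbai (p ^ r) 1
    rw [one_mul, haq hjN, pow_one, ← hz] at h1
    exact h1.symm
  have hzb : Commute z b := hz ▸ Commute.pow_self b _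
  have hzo : orderOf z = p ^ (n - r) := by
    rw [hz, orderOf_pow_of_dvd hN.ne' (hb ▸ pow_dvd_pow p hrn), hb,
      Nat.pow_div hrn hp.pos]
  have hzp : ∀ {i l : ℕ}, i ≡ l [MOD p ^ (n - r)] → z ^ i = z ^ l := by
    intro i l h
    rw [pow_eq_pow_iff_modEq, hzo]
    exact h
  have haz : ∀ i, (a * z) ^ i = a ^ i * z ^ i := fun i => hza.mul_pow i
  obtain ⟨c, hc1, hc2⟩ := Nat.chineseRemainder hcop j 1
  obtain ⟨c', hc'1, hc'2⟩ := Nat.chineseRemainder hcop (j ^ (p ^ r - 1)) 1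
  obtain ⟨g, hg1, hg2⟩ := Nat.chineseRemainder hcop 1 0
  obtain ⟨m, hm1, hm2⟩ := Nat.chineseRemainder hcop 0 1
  have hjj : j ^ (p ^ r - 1) * j ≡ 1 [MOD q] := by
    rwa [← pow_succ, Nat.sub_add_cancel hN]
  have hgpow : (a * z) ^ g = a := by rw [haz, haq hg1, hzp hg2, pow_one, pow_zero, mul_one]
  refine ⟨a * z, c, c', g, m, ?_, ?_, ?_, ?_, ?_, ?_, hc2, hg1, hg2, hm1, hm2, ?_⟩
  · rw [hza.orderOf_mul_eq_mul_orderOf_of_coprime (by rw [ha, hzo]; exact hcop), ha, hzo]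
  · rw [eq_top_iff, ← hgen, Subgroup.closure_le]
    rintro x (rfl | hx)
    · have h1 : (x * z) ∈ Subgroup.closure {x * z, b} :=
        Subgroup.subset_closure (Set.mem_insert _ _)
      have h2 := pow_mem h1 g
      rwa [hgpow] at h2
    · exact Subgroup.subset_closure (Set.mem_insert_of_mem _ hx)
  · have h1 := hbai 1 (j ^ (p ^ r - 1))
    rw [pow_one, pow_one, haq hjj, pow_one] at h1
    rw [haz, haq hc'1, hzp hc'2, pow_one, ← mul_assoc, h1, mul_assoc, mul_assoc, hzb.eq]
  · rw [haz, haq hm1, hzp hm2, pow_one, pow_zero, one_mul, hz]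
  · refine hcrt ((hc1.mul hc'1).trans ?_) (hc2.mul hc'2)
    rw [mul_comm]
    exact hjj
  · refine hcrt ((hc1.pow _).trans hjN) ?_
    simpa using hc2.pow (p ^ r)
  · intro i hi l hl hil
    have hprim : IsPrimitiveRoot (j : ZMod q) (p ^ r) := hj ▸ IsPrimitiveRoot.orderOf _
    have hc' : (c' : ZMod q) * j = 1 := by
      have := (ZMod.natCast_eq_natCast_iff _ _ _).mpr ((hc'1.mul_right j).trans hjj)
      simpa using this
    have h1 := (ZMod.natCast_eq_natCast_iff _ _ _).mpr hil
    rw [Nat.cast_pow, Nat.cast_pow] at h1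
    refine hprim.pow_inj hi hl ?_
    calc (j : ZMod q) ^ i = (c' * j) ^ l * j ^ i := by rw [hc', one_pow, one_mul]
      _ = c' ^ i * j ^ i * j ^ l := by rw [mul_pow, h1]; ring
      _ = j ^ l := by rw [← mul_pow, hc', one_pow, one_mul]

lemma finite_int_of_finite_monoidAlgebra {G M : Type*} [Group G] [Finite G] [AddCommGroup M]
    [Module ℤ M] (ρ : Representation ℤ G M) (h : Module.Finite (MonoidAlgebra ℤ G) ρ.asModule) :
    Module.Finite ℤ M := by
  -- The given `ℤ`-module structure is the canonical one, so that the two structures on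
  -- `ρ.asModule` agree definitionally.
  obtain rfl : ‹Module ℤ M› = AddCommGroup.toIntModule M := Subsingleton.elim _ _
  have h2 : Module.Finite ℤ ρ.asModule := Module.Finite.trans (MonoidAlgebra ℤ G) _
  exact h2

lemma char_inner_eq_finrank {G W : Type} [Group G] [Fintype G] [AddCommGroup W] [Module ℂ W]
    [FiniteDimensional ℂ W] (σ : Representation ℂ G W) (τ : FDRep ℂ G) :
    (Fintype.card G : ℂ)⁻¹ *
        ∑ g : G, LinearMap.trace ℂ W (σ g) * (starRingEnd ℂ) (τ.character g) =
      Module.finrank ℂ (Representation.IntertwiningMap τ.ρ σ) := by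
  have hcard : (Nat.card G : ℂ) ≠ 0 := Nat.cast_ne_zero.mpr Nat.card_pos.ne'
  have := invertibleOfNonzero hcard
  rw [← Representation.card_inv_mul_sum_char_mul_char_eq_finrank (ρ := τ.ρ) (σ := σ),
    Nat.card_eq_fintype_card]
  congr 1
  refine Finset.sum_congr rfl fun g _ => ?_
  congr 1
  refine (trace_conj_of_finite_order (Fintype.card_ne_zero (α := G)) (τ.ρ g) (τ.ρ g⁻¹) ?_ ?_).symm
  · rw [← map_pow, pow_card_eq_one, map_one]
  · rw [← map_mul, inv_mul_cancel, map_one]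

/-- Let `p, q` be distinct odd primes, `G = C_q ⋊ C_{p^n}` non-abelian
(presented by `a, b` with `a^q = b^{p^n} = 1`, `b a b⁻¹ = a^j`, `j` of order `p^r` mod `q`).
Let `M` be a finitely generated `ℤ[G]`-module (given by a representation `ρ` of `G` on the
abelian group `M`, finitely generated over the monoid algebra `ℤ[G]`) and `τ` a faithful
irreducible complex representation of `G`.  If `p^n ∤ q - 1`, then `p` divides the
multiplicity `⟨M ⊗_ℤ ℂ, τ⟩`, expressed via the character inner product, where the character
of `M ⊗_ℤ ℂ` at `g` is the trace of the `ℂ`-linear extension of the action of `g`. -/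
theorem multiplicity_in_integral_module_divisible
    (p q n r : ℕ) (hp : p.Prime) (hq : q.Prime) (hpodd : Odd p) (hqodd : Odd q)
    (hpq : p ≠ q) (hn : 1 ≤ n) (hr0 : 0 < r) (hrn : r ≤ n) (hrdvd : p ^ r ∣ q - 1)
    (G : Type) [Group G] [Fintype G] (a b : G) (j : ℕ)
    (ha : orderOf a = q) (hb : orderOf b = p ^ n)
    (hba : b * a * b⁻¹ = a ^ j) (hj : orderOf (j : ZMod q) = p ^ r)
    (hgen : Subgroup.closure {a, b} = ⊤)
    (M : Type) [AddCommGroup M] [Module ℤ M] (ρ : Representation ℤ G M)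
    (hMfg : Module.Finite (MonoidAlgebra ℤ G) ρ.asModule)
    (τ : FDRep ℂ G) [Simple τ] (hτ : Function.Injective τ.ρ)
    (hndvd : ¬ p ^ n ∣ q - 1) :
    ∃ m : ℕ,
      (Fintype.card G : ℂ)⁻¹ *
          ∑ g : G,
            (LinearMap.trace ℂ (ℂ ⊗[ℤ] M) (LinearMap.baseChange ℂ (ρ g))) *
              (starRingEnd ℂ) (τ.character g) =
        (p * m : ℕ) := by
  have hrn' : r < n := lt_of_le_of_ne hrn fun h => hndvd (h ▸ hrdvd)
  obtain ⟨f, hf1, hf2⟩ := exists_frobenius_exponent hp hpodd hq hpq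
    ((dvd_pow_self p hr0.ne').trans hrdvd) hndvd
  have hM := finite_int_of_finite_monoidAlgebra ρ hMfg
  obtain ⟨h, c, c', g, m, hord, hgen', hhb, hbN, hcc, hcN, hc1, hg1, hg2, hm1, hm2, hinj⟩ :=
    exists_cyclic_generator hp hq hpq hrn ha hb hba hj hgen
  have hnontriv : Nontrivial τ := by
    by_contra hcon
    rw [not_nontrivial_iff_subsingleton] at hcon
    refine id_nonzero τ ?_
    ext x
    exact Subsingleton.elim (α := τ) _ _
  have hirr := eq_bot_or_eq_top_of_simple τ
  obtain ⟨θ, v, hv0, hv, hθ⟩ := exists_eigenvector τ.ρ hτ hirr hgen' hhb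
  have hθinj : ∀ i < p ^ r, ∀ l < p ^ r, θ ^ c' ^ i = θ ^ c' ^ l → i = l := by
    intro i hi l hl hil
    refine hinj i hi l hl (Nat.ModEq.of_mul_right (p ^ (n - r)) ?_)
    rw [← hord, hθ.eq_orderOf]
    have hu : IsUnit θ := hθ.isUnit (orderOf_pos h).ne'
    obtain ⟨u, rfl⟩ := hu
    rw [orderOf_units, ← pow_eq_pow_iff_modEq]
    exact Units.ext (by simpa using hil)
  let σ : Representation ℂ G (ℂ ⊗[ℤ] M) :=
    (Module.End.baseChangeHom ℤ ℂ M : Module.End ℤ M →* Module.End ℂ (ℂ ⊗[ℤ] M)).comp ρ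
  have hdvd := dvd_finrank_eigenspace ρ hp hq hpq hr0 hrn' hf1 hf2
    (hord ▸ pow_orderOf_eq_one h) hhb hbN hcc hcN hc1 hg1 hg2 hm1 hm2 (hord ▸ hθ)
  have hmult := (char_inner_eq_finrank σ τ).trans (congrArg _
    (finrank_intertwiningMap τ.ρ σ hirr hgen' (pow_pos hp.pos r) hhb hbN hv0 hv hθinj))
  obtain ⟨d, hd⟩ := hdvd
  exact ⟨d, hmult.trans (congrArg _ hd)⟩
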